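/- Let L₊ and L₋ be countable linear orders that are convex-biembeddable, i.e., there exist convex embeddings f₊ : L₊ → L₋ and f₋ : L₋ → L₊. Suppose there exist nonempty countable families S₊ and S₋ of linear orders and dense colorings χ₊ : ℚ → S₊ and χ₋ : ℚ → S₋ of (ℚ,<) such that L₊ is order isomorphic to the ordered sum Σ_{q ∈ ℚ} χ₊(q) and L₋ is order isomorphic to the ordered sum Σ_{q ∈ ℚ} χ₋(q). Then L₊ and L₋ are order isomorphic. -/

import Mathlib

/-- A coloring `χ : L → ι` of a linear order `L` is *dense* if for every color `i`
and all `x < x'` in `L` there is `y` with `x < y < x'` and `χ y = i`. -/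
def DenseColoring {L : Type*} [LinearOrder L] {ι : Type*} (χ : L → ι) : Prop :=
  ∀ i : ι, ∀ x x' : L, x < x' → ∃ y : L, x < y ∧ y < x' ∧ χ y = i

/-- A subset `A` of a linear order is *convex* if every element outside `A`
lies entirely below or entirely above `A`. -/
def IsConvexSet {L : Type*} [LinearOrder L] (A : Set L) : Prop :=
  ∀ a ∉ A, (∀ x ∈ A, a < x) ∨ (∀ x ∈ A, x < a)

/-! ### A back-and-forth argument respecting a relation -/

section BackAndForth

variable {α β : Type*} [LinearOrder α] [LinearOrder β]

/-- If every open interval of `β` contains a point related to `a`, then a finite partial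
isomorphism can be extended to `a` by a point related to `a`. -/
theorem exists_related_across [DenselyOrdered β] [NoMinOrder β] [NoMaxOrder β] [Nonempty β]
    {R : α → β → Prop} (hR : ∀ a, ∀ x y : β, x < y → ∃ b, x < b ∧ b < y ∧ R a b)
    (f : Finset (α × β)) (hf : ∀ p ∈ f, ∀ q ∈ f, cmp p.1 q.1 = cmp p.2 q.2)
    (hfR : ∀ p ∈ f, R p.1 p.2) (a : α) :
    ∃ b : β, R a b ∧ ∀ p ∈ f, cmp p.1 a = cmp p.2 b := by
  classical
  by_cases h : ∃ b, (a, b) ∈ f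
  · obtain ⟨b, hb⟩ := h
    exact ⟨b, hfR _ hb, fun p hp ↦ hf _ hp _ hb⟩
  have key : ∀ x ∈ {p ∈ f | p.1 < a}.image Prod.snd,
      ∀ y ∈ {p ∈ f | a < p.1}.image Prod.snd, x < y := by
    intro x hx y hy
    simp only [Finset.mem_image, Finset.mem_filter] at hx hy
    obtain ⟨p, ⟨hp, hpa⟩, rfl⟩ := hx
    obtain ⟨q, ⟨hq, hqa⟩, rfl⟩ := hy
    exact (lt_iff_lt_of_cmp_eq_cmp (hf _ hp _ hq)).1 (hpa.trans hqa)
  obtain ⟨m, hm₁, hm₂⟩ := Order.exists_between_finsets _ _ key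
  obtain ⟨m', hm'₁, hm'₂⟩ := Order.exists_between_finsets {m} _
    (fun x hx ↦ by simpa only [Finset.mem_singleton.1 hx] using hm₂)
  obtain ⟨b, hmb, hbm, hab⟩ := hR a m m' (hm'₁ m (Finset.mem_singleton_self m))
  refine ⟨b, hab, fun p hp ↦ ?_⟩
  have hpa : p.1 ≠ a := fun he ↦ h ⟨p.2, he ▸ hp⟩
  rcases lt_or_gt_of_ne hpa with hl | hr
  · rw [(cmp_eq_lt_iff _ _).2 hl, (cmp_eq_lt_iff _ _).2]
    exact (hm₁ _ (Finset.mem_image.2 ⟨p, Finset.mem_filter.2 ⟨hp, hl⟩, rfl⟩)).trans hmb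
  · rw [(cmp_eq_gt_iff _ _).2 hr, (cmp_eq_gt_iff _ _).2]
    exact hbm.trans (hm'₂ _ (Finset.mem_image.2 ⟨p, Finset.mem_filter.2 ⟨hp, hr⟩, rfl⟩))

/-- Finite partial order isomorphisms whose graph is contained in the relation `R`. -/
def RelatedPartialIso (R : α → β → Prop) : Type _ :=
  {f : Finset (α × β) // (∀ p ∈ f, ∀ q ∈ f, cmp p.1 q.1 = cmp p.2 q.2) ∧ ∀ p ∈ f, R p.1 p.2}

instance (R : α → β → Prop) : Preorder (RelatedPartialIso R) :=
  inferInstanceAs (Preorder (Subtype _))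

theorem RelatedPartialIso.exists_insert {R : α → β → Prop} (f : RelatedPartialIso R) {a : α}
    {b : β} (hab : R a b) (h : ∀ p ∈ f.1, cmp p.1 a = cmp p.2 b) :
    ∃ g : RelatedPartialIso R, (a, b) ∈ g.1 ∧ f ≤ g := by
  classical
  refine ⟨⟨insert (a, b) f.1, fun p hp q hq ↦ ?_, fun p hp ↦ ?_⟩, Finset.mem_insert_self _ _,
    Finset.subset_insert _ _⟩
  · rw [Finset.mem_insert] at hp hq
    rcases hp with (rfl | pf) <;> rcases hq with (rfl | qf)
    · simp only [cmp_self_eq_eq]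
    · rw [cmp_eq_cmp_symm]
      exact h _ qf
    · exact h _ pf
    · exact f.2.1 _ pf _ qf
  · rcases Finset.mem_insert.1 hp with rfl | hp
    · exact hab
    · exact f.2.2 _ hp

/-- Cantor's isomorphism theorem, with the isomorphism contained in a relation that is dense
in both directions. -/
theorem exists_orderIso_of_dense_relation
    [Countable α] [DenselyOrdered α] [NoMinOrder α] [NoMaxOrder α] [Nonempty α]
    [Countable β] [DenselyOrdered β] [NoMinOrder β] [NoMaxOrder β] [Nonempty β]
    (R : α → β → Prop) (hR : ∀ a, ∀ x y : β, x < y → ∃ b, x < b ∧ b < y ∧ R a b)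
    (hR' : ∀ b, ∀ x y : α, x < y → ∃ a, x < a ∧ a < y ∧ R a b) :
    ∃ φ : α ≃o β, ∀ a, R a (φ a) := by
  classical
  cases nonempty_encodable α
  cases nonempty_encodable β
  let left (a : α) : Order.Cofinal (RelatedPartialIso R) :=
    { carrier := {f | ∃ b : β, (a, b) ∈ f.1}
      isCofinal := fun f ↦ by
        obtain ⟨b, hab, h⟩ := exists_related_across hR f.1 f.2.1 f.2.2 a
        obtain ⟨g, hg, hfg⟩ := f.exists_insert hab h
        exact ⟨g, ⟨b, hg⟩, hfg⟩ }
  let right (b : β) : Order.Cofinal (RelatedPartialIso R) :=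
    { carrier := {f | ∃ a : α, (a, b) ∈ f.1}
      isCofinal := fun f ↦ by
        obtain ⟨a, hab, h⟩ := exists_related_across (R := fun b a ↦ R a b) hR'
          (f.1.image Prod.swap)
          (by
            simp only [Finset.mem_image]
            rintro _ ⟨p, hp, rfl⟩ _ ⟨q, hq, rfl⟩
            exact (f.2.1 p hp q hq).symm)
          (by
            simp only [Finset.mem_image]
            rintro _ ⟨p, hp, rfl⟩
            exact f.2.2 p hp) b
        obtain ⟨g, hg, hfg⟩ := f.exists_insert hab
          fun p hp ↦ (h p.swap (Finset.mem_image_of_mem _ hp)).symm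
        exact ⟨g, ⟨a, hg⟩, hfg⟩ }
  let cof : α ⊕ β → Order.Cofinal (RelatedPartialIso R) := Sum.elim left right
  let I : Order.Ideal (RelatedPartialIso R) :=
    Order.idealOfCofinals ⟨∅, by simp, by simp⟩ cof
  have hF : ∀ a, ∃ b, ∃ f ∈ I, (a, b) ∈ f.1 := fun a ↦ by
    obtain ⟨f, ⟨b, hb⟩, hf⟩ := Order.cofinal_meets_idealOfCofinals _ cof (Sum.inl a)
    exact ⟨b, f, hf, hb⟩
  have hG : ∀ b, ∃ a, ∃ f ∈ I, (a, b) ∈ f.1 := fun b ↦ by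
    obtain ⟨f, ⟨a, ha⟩, hf⟩ := Order.cofinal_meets_idealOfCofinals _ cof (Sum.inr b)
    exact ⟨a, f, hf, ha⟩
  choose F hF using hF
  choose G hG using hG
  refine ⟨OrderIso.ofCmpEqCmp F G fun a b ↦ ?_, fun a ↦ ?_⟩
  · obtain ⟨f, hf, ha⟩ := hF a
    obtain ⟨g, hg, hb⟩ := hG b
    obtain ⟨m, _, fm, gm⟩ := I.directed _ hf _ hg
    exact m.2.1 (a, _) (fm ha) (_, b) (gm hb)
  · obtain ⟨f, -, ha⟩ := hF a
    exact f.2.2 _ ha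

end BackAndForth

/-! ### Maps between linear orders that are fibered over linear orders -/

section Fibered

variable {L M I J : Type*} [LinearOrder L] [LinearOrder M] [LinearOrder I] [LinearOrder J]

/-- Isomorphisms between corresponding fibers glue to a strictly monotone map. -/
theorem exists_strictMono_of_fiber_orderIso {p : L → I} (hp : Monotone p) {r : M → J}
    (hr : Monotone r) (φ : I ↪o J)
    (e : ∀ i, Nonempty ({x // p x = i} ≃o {y // r y = φ i})) :
    ∃ f : L → M, StrictMono f ∧ (∀ x, r (f x) = φ (p x)) ∧
      Set.range f = r ⁻¹' Set.range φ := by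
  let e : ∀ i, {x // p x = i} ≃o {y // r y = φ i} := fun i ↦ (e i).some
  have hf : ∀ x, r (e (p x) ⟨x, rfl⟩) = φ (p x) := fun x ↦ (e (p x) ⟨x, rfl⟩).2
  refine ⟨fun x ↦ e (p x) ⟨x, rfl⟩, fun x y hxy ↦ ?_, hf, Set.Subset.antisymm ?_ ?_⟩
  · rcases (hp hxy.le).eq_or_lt with h | h
    · have aux : ∀ i (hi : p x = i), (e (p x) ⟨x, rfl⟩ : M) = e i ⟨x, hi⟩ := by
        rintro _ rfl
        rfl
      change (e (p x) ⟨x, rfl⟩ : M) < e (p y) ⟨y, rfl⟩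
      rw [aux _ h]
      exact (e (p y)).strictMono (a := ⟨x, h⟩) (b := ⟨y, rfl⟩) hxy
    · refine hr.reflect_lt ?_
      change r (e (p x) ⟨x, rfl⟩) < r (e (p y) ⟨y, rfl⟩)
      rw [hf, hf]
      exact φ.strictMono h
  · rintro _ ⟨x, rfl⟩
    exact ⟨p x, (hf x).symm⟩
  · rintro y ⟨i, hi⟩
    obtain ⟨⟨x, rfl⟩, hx⟩ := (e i).surjective ⟨y, hi.symm⟩
    exact ⟨x, congrArg Subtype.val hx⟩

/-- A monotone choice of representatives for an equivalence relation with convex classes. -/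
theorem exists_monotone_representative (s : Setoid L)
    (hs : ∀ x y z : L, x ≤ y → y ≤ z → s x z → s x y) :
    ∃ r : L → L, Monotone r ∧ ∀ x y, r x = r y ↔ s x y := by
  let r : L → L := fun x ↦ (Quotient.mk s x).out
  have hr : ∀ x, s (r x) x := fun x ↦ Quotient.mk_out x
  have hr' : ∀ x y, s x y → r x = r y := fun x y h ↦
    congrArg Quotient.out (Quotient.sound h)
  refine ⟨r, fun x y hxy ↦ ?_, fun x y ↦ ⟨fun h ↦ ?_, hr' x y⟩⟩
  · by_contra! hlt
    refine hlt.ne' (hr' x y ?_)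
    rcases le_total (r x) y with h | h
    · exact s.trans (s.symm (hr x)) (s.trans (s.symm (hs _ _ _ hlt.le h (hr y))) (hr y))
    · exact hs _ _ _ hxy h (s.symm (hr x))
  · exact s.trans (s.symm (hr x)) (h ▸ hr y)

end Fibered

/-! ### Convex embeddings -/

/-- A strictly monotone map with order-connected range. -/
def IsConvexEmbedding {L M : Type*} [LinearOrder L] [LinearOrder M] (f : L → M) : Prop :=
  StrictMono f ∧ (Set.range f).OrdConnected

/-- Every open ray of `M` contains a convex copy of `K`. -/
def EmbedsInRays (K M : Type*) [LinearOrder K] [LinearOrder M] : Prop :=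
  ∀ z : M, (∃ h : K → M, IsConvexEmbedding h ∧ ∀ t, z < h t) ∧
    ∃ h : K → M, IsConvexEmbedding h ∧ ∀ t, h t < z

/-- The interval between `x` and `y` contains no convex copy of `K`. -/
def ConvexlyNear (K : Type*) {M : Type*} [LinearOrder K] [LinearOrder M] (x y : M) : Prop :=
  ¬∃ h : K → M, IsConvexEmbedding h ∧ ∀ t, h t ∈ Set.uIcc x y

section ConvexEmbedding

variable {K L M N : Type*} [LinearOrder K] [LinearOrder L] [LinearOrder M] [LinearOrder N]

theorem IsConvexSet.ordConnected {A : Set L} (hA : IsConvexSet A) : A.OrdConnected :=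
  ⟨fun x hx y hy a ha ↦ by
    by_contra h
    rcases hA a h with h | h
    · exact (h x hx).not_ge ha.1
    · exact (h y hy).not_ge ha.2⟩

theorem IsConvexEmbedding.comp {g : M → N} {f : L → M} (hg : IsConvexEmbedding g)
    (hf : IsConvexEmbedding f) : IsConvexEmbedding (g ∘ f) := by
  refine ⟨hg.1.comp hf.1, ⟨?_⟩⟩
  rintro _ ⟨x, rfl⟩ _ ⟨y, rfl⟩ c ⟨hc₁, hc₂⟩
  obtain ⟨b, rfl⟩ := hg.2.out ⟨f x, rfl⟩ ⟨f y, rfl⟩ ⟨hc₁, hc₂⟩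
  obtain ⟨a, rfl⟩ := hf.2.out ⟨x, rfl⟩ ⟨y, rfl⟩ ⟨hg.1.le_iff_le.1 hc₁, hg.1.le_iff_le.1 hc₂⟩
  exact ⟨a, rfl⟩

theorem IsConvexEmbedding.exists_lift {k : K → N} {h : M → N} (hk : IsConvexEmbedding k)
    (hh : IsConvexEmbedding h) (hkh : ∀ t, k t ∈ Set.range h) :
    ∃ k' : K → M, IsConvexEmbedding k' ∧ ∀ t, h (k' t) = k t := by
  choose k' hk' using hkh
  refine ⟨k', ⟨fun x y hxy ↦ ?_, ⟨?_⟩⟩, hk'⟩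
  · rw [← hh.1.lt_iff_lt, hk', hk']
    exact hk.1 hxy
  · rintro _ ⟨x, rfl⟩ _ ⟨y, rfl⟩ c ⟨hc₁, hc₂⟩
    rw [← hh.1.le_iff_le, hk'] at hc₁ hc₂
    obtain ⟨t, ht⟩ := hk.2.out ⟨x, rfl⟩ ⟨y, rfl⟩ ⟨hc₁, hc₂⟩
    exact ⟨t, hh.1.injective (by rw [hk', ht])⟩

theorem IsConvexEmbedding.lt_or_gt_of_notMem_range {h : M → N} (hh : IsConvexEmbedding h) {w : N}
    (hw : w ∉ Set.range h) : (∀ t, h t < w) ∨ ∀ t, w < h t := by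
  by_contra! H
  obtain ⟨⟨s, hs⟩, t, ht⟩ := H
  exact hw (hh.2.out ⟨t, rfl⟩ ⟨s, rfl⟩ ⟨ht, hs⟩)

theorem IsConvexEmbedding.convexlyNear_iff {h : M → N} (hh : IsConvexEmbedding h) {x y : M} :
    ConvexlyNear K (h x) (h y) ↔ ConvexlyNear K x y := by
  have mem : ∀ t, h t ∈ Set.uIcc (h x) (h y) ↔ t ∈ Set.uIcc x y := fun t ↦ by
    simp only [Set.mem_uIcc, hh.1.le_iff_le]
  refine not_congr ⟨fun ⟨k, hk, hkxy⟩ ↦ ?_, fun ⟨k, hk, hkxy⟩ ↦ ?_⟩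
  · obtain ⟨k', hk', hkk'⟩ := hk.exists_lift hh
      fun t ↦ hh.2.uIcc_subset ⟨x, rfl⟩ ⟨y, rfl⟩ (hkxy t)
    exact ⟨k', hk', fun t ↦ by rw [← mem, hkk']; exact hkxy t⟩
  · exact ⟨h ∘ k, hh.comp hk, fun t ↦ (mem _).2 (hkxy t)⟩

theorem EmbedsInRays.of_embedding {f : K → L} (hf : IsConvexEmbedding f)
    (h : EmbedsInRays L M) : EmbedsInRays K M := fun z ↦ by
  obtain ⟨⟨u, hu, hzu⟩, v, hv, hvz⟩ := h z
  exact ⟨⟨u ∘ f, hu.comp hf, fun t ↦ hzu _⟩, v ∘ f, hv.comp hf, fun t ↦ hvz _⟩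

theorem ConvexlyNear.symm {x y : M} (h : ConvexlyNear K x y) : ConvexlyNear K y x := by
  rwa [ConvexlyNear, Set.uIcc_comm]

theorem ConvexlyNear.mono {x y x' y' : M} (h : ConvexlyNear K x y)
    (hxy : Set.uIcc x' y' ⊆ Set.uIcc x y) : ConvexlyNear K x' y' :=
  fun ⟨k, hk, hkxy⟩ ↦ h ⟨k, hk, fun t ↦ hxy (hkxy t)⟩

theorem ConvexlyNear.refl [Nonempty K] (hK : EmbedsInRays K K) (x : M) : ConvexlyNear K x x := by
  rintro ⟨h, hh, hx⟩
  obtain ⟨t⟩ := ‹Nonempty K›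
  obtain ⟨u, -, hu⟩ := (hK t).1
  simp only [Set.uIcc_self, Set.mem_singleton_iff] at hx
  exact (hh.1 (hu t)).ne ((hx _).trans (hx _).symm)

theorem ConvexlyNear.trans (hK : EmbedsInRays K K) {x y z : M} (hxy : ConvexlyNear K x y)
    (hyz : ConvexlyNear K y z) : ConvexlyNear K x z := by
  have below : ¬∃ h : K → M, IsConvexEmbedding h ∧ ∀ t, h t ∈ Set.uIcc x z ∧ h t ≤ y := by
    rintro ⟨h, hh, hxz⟩
    rcases le_total x z with hle | hle
    · refine hxy ⟨h, hh, fun t ↦ ?_⟩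
      have := hxz t
      rw [Set.uIcc_of_le hle] at this
      exact Set.mem_uIcc.2 (Or.inl ⟨this.1.1, this.2⟩)
    · refine hyz ⟨h, hh, fun t ↦ ?_⟩
      have := hxz t
      rw [Set.uIcc_of_ge hle] at this
      exact Set.mem_uIcc.2 (Or.inr ⟨this.1.1, this.2⟩)
  have above : ¬∃ h : K → M, IsConvexEmbedding h ∧ ∀ t, h t ∈ Set.uIcc x z ∧ y ≤ h t := by
    rintro ⟨h, hh, hxz⟩
    rcases le_total x z with hle | hle
    · refine hyz ⟨h, hh, fun t ↦ ?_⟩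
      have := hxz t
      rw [Set.uIcc_of_le hle] at this
      exact Set.mem_uIcc.2 (Or.inl ⟨this.2, this.1.2⟩)
    · refine hxy ⟨h, hh, fun t ↦ ?_⟩
      have := hxz t
      rw [Set.uIcc_of_ge hle] at this
      exact Set.mem_uIcc.2 (Or.inr ⟨this.2, this.1.2⟩)
  rintro ⟨h, hh, hxz⟩
  by_cases hy : y ∈ Set.range h
  · obtain ⟨s, rfl⟩ := hy
    obtain ⟨-, u, hu, hus⟩ := hK s
    exact below ⟨h ∘ u, hh.comp hu, fun t ↦ ⟨hxz _, (hh.1 (hus t)).le⟩⟩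
  · rcases hh.lt_or_gt_of_notMem_range hy with H | H
    · exact below ⟨h, hh, fun t ↦ ⟨hxz t, (H t).le⟩⟩
    · exact above ⟨h, hh, fun t ↦ ⟨hxz t, (H t).le⟩⟩

theorem EmbedsInRays.exists_gt_not_convexlyNear (hM : EmbedsInRays K M) (hK : EmbedsInRays K K)
    [Nonempty K] (z : M) : ∃ w, z < w ∧ ¬ConvexlyNear K z w := by
  obtain ⟨h, hh, hz⟩ := (hM z).1
  obtain ⟨s⟩ := ‹Nonempty K›
  obtain ⟨-, u, hu, hus⟩ := hK s
  exact ⟨h s, hz s, not_not.2 ⟨h ∘ u, hh.comp hu, fun t ↦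
    Set.mem_uIcc.2 (Or.inl ⟨(hz _).le, (hh.1 (hus t)).le⟩)⟩⟩

theorem EmbedsInRays.exists_lt_not_convexlyNear (hM : EmbedsInRays K M) (hK : EmbedsInRays K K)
    [Nonempty K] (z : M) : ∃ w, w < z ∧ ¬ConvexlyNear K w z := by
  obtain ⟨h, hh, hz⟩ := (hM z).2
  obtain ⟨s⟩ := ‹Nonempty K›
  obtain ⟨u, hu, hus⟩ := (hK s).1
  exact ⟨h s, hz s, not_not.2 ⟨h ∘ u, hh.comp hu, fun t ↦
    Set.mem_uIcc.2 (Or.inl ⟨(hh.1 (hus t)).le, (hz _).le⟩)⟩⟩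

/-- The range of a convex embedding is closed under nearness. -/
theorem IsConvexEmbedding.mem_range_of_convexlyNear {h : M → N} (hh : IsConvexEmbedding h)
    (hM : EmbedsInRays K M) {z : M} {w : N} (hw : ConvexlyNear K (h z) w) :
    w ∈ Set.range h := by
  by_contra hwr
  obtain ⟨⟨u, hu, hzu⟩, v, hv, hvz⟩ := hM z
  rcases hh.lt_or_gt_of_notMem_range hwr with H | H
  · exact hw ⟨h ∘ u, hh.comp hu, fun t ↦
      Set.mem_uIcc.2 (Or.inl ⟨(hh.1 (hzu t)).le, (H _).le⟩)⟩
  · exact hw ⟨h ∘ v, hh.comp hv, fun t ↦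
      Set.mem_uIcc.2 (Or.inr ⟨(H _).le, (hh.1 (hvz t)).le⟩)⟩

/-- Between two points that are not near, there are nearness classes isomorphic to any
prescribed class of `M`. -/
theorem exists_between_fiber_orderIso {I J : Type*} [LinearOrder I] [LinearOrder J]
    {p : M → I} (hps : Function.Surjective p) (hp : ∀ x y, p x = p y ↔ ConvexlyNear K x y)
    {q : N → J} (hqs : Function.Surjective q) (hqm : Monotone q)
    (hq : ∀ x y, q x = q y ↔ ConvexlyNear K x y)
    (hM : EmbedsInRays K M) {g : M → K} (hg : IsConvexEmbedding g) (i : I) {a b : J}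
    (hab : a < b) :
    ∃ j, a < j ∧ j < b ∧ Nonempty ({x // p x = i} ≃o {y // q y = j}) := by
  obtain ⟨z, rfl⟩ := hps i
  obtain ⟨x, rfl⟩ := hqs a
  obtain ⟨y, rfl⟩ := hqs b
  have hxy : x < y := hqm.reflect_lt hab
  obtain ⟨k, hk, hkxy⟩ := not_not.1 (mt (hq x y).2 hab.ne)
  have hh : IsConvexEmbedding (k ∘ g) := hk.comp hg
  have hhxy : ∀ t, x ≤ (k ∘ g) t ∧ (k ∘ g) t ≤ y := fun t ↦ by
    rw [← Set.mem_Icc, ← Set.uIcc_of_le hxy.le]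
    exact hkxy (g t)
  generalize k ∘ g = h at hh hhxy
  obtain ⟨⟨u, hu, hzu⟩, v, hv, hvz⟩ := hM z
  refine ⟨q (h z), (hqm (hhxy z).1).lt_of_ne fun he ↦ ?_,
    (hqm (hhxy z).2).lt_of_ne fun he ↦ ?_, ?_⟩
  · exact (hq _ _).1 he ⟨h ∘ v, hh.comp hv, fun t ↦
      Set.mem_uIcc.2 (Or.inl ⟨(hhxy _).1, (hh.1 (hvz t)).le⟩)⟩
  · exact (hq _ _).1 he ⟨h ∘ u, hh.comp hu, fun t ↦
      Set.mem_uIcc.2 (Or.inl ⟨(hh.1 (hzu t)).le, (hhxy _).2⟩)⟩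
  · refine ⟨StrictMono.orderIsoOfSurjective
      (fun x : {x // p x = p z} ↦ (⟨h x, ?_⟩ : {y // q y = q (h z)}))
      (fun x y hxy ↦ hh.1 hxy) ?_⟩
    · exact (hq _ _).2 (hh.convexlyNear_iff.2 ((hp _ _).1 x.2))
    · rintro ⟨w, hw⟩
      have hw' := (hq _ _).1 hw
      obtain ⟨t, rfl⟩ := hh.mem_range_of_convexlyNear hM hw'.symm
      exact ⟨⟨t, (hp _ _).2 (hh.convexlyNear_iff.1 hw')⟩, rfl⟩

theorem exists_convexlyNear_representative (K M : Type*) [LinearOrder K] [LinearOrder M]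
    [Nonempty K] (hK : EmbedsInRays K K) :
    ∃ r : M → M, Monotone r ∧ ∀ x y, r x = r y ↔ ConvexlyNear K x y :=
  exists_monotone_representative
    ⟨ConvexlyNear K, ConvexlyNear.refl hK, ConvexlyNear.symm, ConvexlyNear.trans hK⟩
    fun x y z hxy hyz h ↦ ConvexlyNear.mono h (by
      rw [Set.uIcc_of_le hxy, Set.uIcc_of_le (hxy.trans hyz)]
      exact Set.Icc_subset_Icc_right hyz)

/-- The quotient of `M` by nearness is a dense order without endpoints. -/
theorem dense_quotient {I : Type*} [LinearOrder I] {p : M → I} (hps : Function.Surjective p)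
    (hpm : Monotone p) (hp : ∀ x y, p x = p y ↔ ConvexlyNear K x y) [Nonempty K]
    (hK : EmbedsInRays K K) (hM : EmbedsInRays K M) {g : M → K} (hg : IsConvexEmbedding g) :
    DenselyOrdered I ∧ NoMinOrder I ∧ NoMaxOrder I := by
  refine ⟨⟨fun a b hab ↦ ?_⟩, ⟨fun a ↦ ?_⟩, ⟨fun a ↦ ?_⟩⟩
  · obtain ⟨j, haj, hjb, -⟩ := exists_between_fiber_orderIso hps hp hps hpm hp hM hg a hab
    exact ⟨j, haj, hjb⟩
  · obtain ⟨z, rfl⟩ := hps a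
    obtain ⟨w, hwz, hw⟩ := hM.exists_lt_not_convexlyNear hK z
    exact ⟨p w, (hpm hwz.le).lt_of_ne (mt (hp _ _).1 hw)⟩
  · obtain ⟨z, rfl⟩ := hps a
    obtain ⟨w, hwz, hw⟩ := hM.exists_gt_not_convexlyNear hK z
    exact ⟨p w, (hpm hwz.le).lt_of_ne (mt (hp _ _).1 hw)⟩

/-- Convex-biembeddable countable linear orders that embed convexly into all their open rays
are isomorphic. -/
theorem nonempty_orderIso_of_embedsInRays [Countable L] [Countable M]
    {f : L → M} (hf : IsConvexEmbedding f) {g : M → L} (hg : IsConvexEmbedding g)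
    (hL : EmbedsInRays L L) (hM : EmbedsInRays M M) : Nonempty (L ≃o M) := by
  rcases isEmpty_or_nonempty L with hLe | hLn
  · have : IsEmpty M := g.isEmpty
    exact ⟨OrderIso.ofIsEmpty L M⟩
  have hMn : Nonempty M := hLn.map f
  have hLM : EmbedsInRays L M := hM.of_embedding hf
  have hid : IsConvexEmbedding (id : L → L) :=
    ⟨strictMono_id, by rw [Set.range_id]; exact Set.ordConnected_univ⟩
  obtain ⟨r, hrm, hr⟩ := exists_convexlyNear_representative L L hL
  obtain ⟨s, hsm, hs⟩ := exists_convexlyNear_representative L M hL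
  let p : L → Set.range r := Set.rangeFactorization r
  let q : M → Set.range s := Set.rangeFactorization s
  have hps : Function.Surjective p := Set.rangeFactorization_surjective
  have hqs : Function.Surjective q := Set.rangeFactorization_surjective
  have hpm : Monotone p := fun _ _ h ↦ hrm h
  have hqm : Monotone q := fun _ _ h ↦ hsm h
  have hp : ∀ x y, p x = p y ↔ ConvexlyNear L x y := fun x y ↦ Subtype.ext_iff.trans (hr x y)
  have hq : ∀ x y, q x = q y ↔ ConvexlyNear L x y := fun x y ↦ Subtype.ext_iff.trans (hs x y)
  obtain ⟨_, _, _⟩ := dense_quotient hps hpm hp hL hL hid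
  obtain ⟨_, _, _⟩ := dense_quotient hqs hqm hq hL hLM hg
  obtain ⟨φ, hφ⟩ := exists_orderIso_of_dense_relation
    (fun i j ↦ Nonempty ({x // p x = i} ≃o {y // q y = j}))
    (fun i _ _ h ↦ exists_between_fiber_orderIso hps hp hqs hqm hq hL hid i h)
    (fun j _ _ h ↦ by
      obtain ⟨i, h₁, h₂, ⟨e⟩⟩ := exists_between_fiber_orderIso hqs hq hps hpm hp hLM hg j h
      exact ⟨i, h₁, h₂, ⟨e.symm⟩⟩)
  obtain ⟨F, hF, -, hFr⟩ := exists_strictMono_of_fiber_orderIso hpm hqm φ.toOrderEmbedding hφ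
  refine ⟨hF.orderIsoOfSurjective F (Set.range_eq_univ.1 ?_)⟩
  rw [hFr, Set.eq_univ_iff_forall]
  exact fun y ↦ φ.surjective (q y)

end ConvexEmbedding

/-! ### Shuffles -/

section Shuffle

theorem nonempty_fiber_orderIso {L I : Type*} [LinearOrder L] [LinearOrder I] {F : I → Type*}
    [∀ i, LinearOrder (F i)] (e : L ≃o Σₗ i : I, F i) (i : I) :
    Nonempty (F i ≃o {x : L // (e x).1 = i}) := by
  refine ⟨StrictMono.orderIsoOfSurjective
    (fun a ↦ (⟨e.symm (toLex ⟨i, a⟩), by rw [e.apply_symm_apply]; rfl⟩ : {x : L // (e x).1 = i}))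
    (fun a b hab ↦ e.symm.strictMono (Sigma.Lex.right a b hab)) ?_⟩
  rintro ⟨x, rfl⟩
  exact ⟨(e x).2, Subtype.ext (e.symm_apply_apply x)⟩

variable {L ι : Type*} [LinearOrder L] {S : ι → Type*} [∀ i, LinearOrder (S i)] {χ : ℚ → ι}

theorem monotone_shuffle_fst (e : L ≃o Σₗ q : ℚ, S (χ q)) : Monotone fun x ↦ (e x).1 := by
  intro x y hxy
  rcases Sigma.Lex.le_def.1 (e.monotone hxy) with h | ⟨h, -⟩
  · exact h.le
  · exact h.le

/-- A shuffle embeds convexly into its restriction to an open interval of `ℚ`. -/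
theorem exists_isConvexEmbedding_shuffle (hχ : DenseColoring χ) (e : L ≃o Σₗ q : ℚ, S (χ q))
    (T : Set ℚ) (hT : T.OrdConnected) [DenselyOrdered T] [NoMinOrder T] [NoMaxOrder T]
    [Nonempty T] : ∃ h : L → L, IsConvexEmbedding h ∧ ∀ t, (e (h t)).1 ∈ T := by
  obtain ⟨φ, hφ⟩ := exists_orderIso_of_dense_relation (α := ℚ) (β := T)
    (fun q q' ↦ χ q = χ q')
    (fun q x y hxy ↦ by
      obtain ⟨b, hxb, hby, hb⟩ := hχ (χ q) x y hxy
      exact ⟨⟨b, hT.out x.2 y.2 ⟨hxb.le, hby.le⟩⟩, hxb, hby, hb.symm⟩)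
    (fun q x y hxy ↦ hχ _ x y hxy)
  have hp := monotone_shuffle_fst e
  obtain ⟨h, hh, hph, hr⟩ := exists_strictMono_of_fiber_orderIso hp hp
    (φ.toOrderEmbedding.trans (OrderEmbedding.subtype (· ∈ T))) fun q ↦ by
      obtain ⟨e₁⟩ := nonempty_fiber_orderIso e q
      obtain ⟨e₂⟩ := nonempty_fiber_orderIso e (φ q)
      have hc : Nonempty (S (χ q) ≃o S (χ (φ q))) := by
        rw [← hφ q]
        exact ⟨OrderIso.refl _⟩
      exact ⟨e₁.symm.trans (hc.some.trans e₂)⟩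
  refine ⟨h, ⟨hh, ?_⟩, fun t ↦ ?_⟩
  · rw [hr]
    refine Set.OrdConnected.preimage_mono ?_ hp
    convert hT
    ext q
    exact ⟨fun ⟨a, ha⟩ ↦ ha ▸ (φ a).2, fun hq ↦ ⟨φ.symm ⟨q, hq⟩, by simp⟩⟩
  · exact (hph t).symm ▸ (φ _).2

theorem embedsInRays_shuffle (hχ : DenseColoring χ) (e : L ≃o Σₗ q : ℚ, S (χ q)) :
    EmbedsInRays L L := fun z ↦ by
  obtain ⟨u, hu, huz⟩ := exists_isConvexEmbedding_shuffle hχ e (Set.Ioi (e z).1)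
    Set.ordConnected_Ioi
  obtain ⟨v, hv, hvz⟩ := exists_isConvexEmbedding_shuffle hχ e (Set.Iio (e z).1)
    Set.ordConnected_Iio
  exact ⟨⟨u, hu, fun t ↦ (monotone_shuffle_fst e).reflect_lt (huz t)⟩,
    v, hv, fun t ↦ (monotone_shuffle_fst e).reflect_lt (hvz t)⟩

end Shuffle

/-- Any two convex-biembeddable countable linear orders that are both (isomorphic to)
shuffles of nonempty countable families of linear orders are order isomorphic. -/
theorem csb_for_countable_shuffles
    {Lp Lm : Type*} [LinearOrder Lp] [LinearOrder Lm] [Countable Lp] [Countable Lm]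
    (fp : Lp ↪o Lm) (hfp : IsConvexSet (Set.range fp))
    (fm : Lm ↪o Lp) (hfm : IsConvexSet (Set.range fm))
    {ιp ιm : Type*} [Nonempty ιp] [Countable ιp] [Nonempty ιm] [Countable ιm]
    (Sp : ιp → Type*) [∀ i, LinearOrder (Sp i)]
    (Sm : ιm → Type*) [∀ i, LinearOrder (Sm i)]
    (χp : ℚ → ιp) (hχp : DenseColoring χp)
    (χm : ℚ → ιm) (hχm : DenseColoring χm)
    (hp : Nonempty (Lp ≃o Σₗ q : ℚ, Sp (χp q)))
    (hm : Nonempty (Lm ≃o Σₗ q : ℚ, Sm (χm q))) :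
    Nonempty (Lp ≃o Lm) := by
  exact nonempty_orderIso_of_embedsInRays ⟨fp.strictMono, hfp.ordConnected⟩
    ⟨fm.strictMono, hfm.ordConnected⟩ (embedsInRays_shuffle hχp hp.some)
    (embedsInRays_shuffle hχm hm.some)
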